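/- The partition function Z is covariant of conformal weight 1/16 under Möbius transformations of the upper half-plane preserving the order of the marked points: let n ≥ 1, let a, b, c, d ∈ ℝ with ad − bc > 0, set w(z) = (az + b)/(cz + d), and let β ∈ X_n be such that c·β_j + d > 0 for all j = 1, …, 2n. Then (w(β_1), …, w(β_{2n})) ∈ X_n and Z(w(β_1), …, w(β_{2n})) = ∏_{j=1}^{2n} w'(β_j)^{−1/16} · Z(β_1, …, β_{2n}), where w'(x) = (ad − bc)/(cx + d)² > 0. In particular, Z(λβ_1 + c₀, …, λβ_{2n} + c₀) = λ^{−n/8}·Z(β) for all λ > 0 and c₀ ∈ ℝ. -/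

import Mathlib

open scoped BigOperators
open Finset

noncomputable section

/-- The chamber `X_n = {b : b₁ < b₂ < ⋯ < b₂ₙ}`. -/
def chamber (n : ℕ) : Set (Fin (2*n) → ℝ) := {b | StrictMono b}

/-- For `k : Fin n` (0-based), `idx n k false` is the index of `b_{2k-1}` (1-based),
and `idx n k true` is the index of `b_{2k}` (1-based). -/
def idx (n : ℕ) (k : Fin n) (s : Bool) : Fin (2*n) :=
  if s then ⟨2*k.val+1, by have := k.isLt; omega⟩ else ⟨2*k.val, by have := k.isLt; omega⟩

/-- The sign `σ_i ∈ {±1}` encoded by a boolean configuration. -/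
def sgn {n : ℕ} (σ : Fin n → Bool) (i : Fin n) : ℝ := if σ i then 1 else -1

/-- The cross-ratio `χ_{ij}(b)`. -/
def chi (n : ℕ) (b : Fin (2*n) → ℝ) (i j : Fin n) : ℝ :=
  ((b (idx n i true) - b (idx n j true)) * (b (idx n i false) - b (idx n j false))) /
  ((b (idx n i true) - b (idx n j false)) * (b (idx n i false) - b (idx n j true)))

/-- The multiple SLE_{16/3} partition function `Z`. -/
def Zfun (n : ℕ) (b : Fin (2*n) → ℝ) : ℝ :=
  (∏ k : Fin n, (b (idx n k true) - b (idx n k false)) ^ (-(1:ℝ)/8)) *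
  ((∑ σ : Fin n → Bool, ∏ p ∈ Finset.univ.filter (fun p : Fin n × Fin n => p.1 < p.2),
      chi n b p.1 p.2 ^ (sgn σ p.1 * sgn σ p.2 / 4)) ^ ((1:ℝ)/2))

/-- Partial derivative in the `i`-th coordinate. -/
def pderiv' {m : ℕ} (i : Fin m) (f : (Fin m → ℝ) → ℝ) (x : Fin m → ℝ) : ℝ :=
  fderiv ℝ f x (Pi.single i 1)

end

/-! Write `w(z) = (pz + q)/(rz + s)`. Everything follows from the difference identity
`w(x) - w(y) = (ps - qr) / ((rx + s)(ry + s)) · (x - y)`. In a cross-ratio every point occurs once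
in the numerator and once in the denominator, so the prefactors cancel and the sum over `σ` does
not change. In `∏ₖ (b₂ₖ - b₂ₖ₋₁)^{-1/8}` every point occurs exactly once, and since
`(ps - qr) / ((rx + s)(ry + s))` is the geometric mean of `w'(x)` and `w'(y)`, the point `βⱼ`
contributes the factor `w'(βⱼ)^{-1/16}`. -/

theorem idx_false_lt_idx_true {n : ℕ} (k : Fin n) : idx n k false < idx n k true := by
  simp [idx, Fin.lt_def]

theorem idx_bijective (n : ℕ) : Function.Bijective fun x : Fin n × Bool => idx n x.1 x.2 := by
  refine (Fintype.bijective_iff_injective_and_card _).2 ⟨?_, by simp [mul_comm]⟩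
  rintro ⟨k, _ | _⟩ ⟨l, _ | _⟩ hkl <;> simp [idx, Fin.ext_iff] at hkl ⊢ <;> omega

theorem prod_eq_prod_idx {M : Type*} [CommMonoid M] {n : ℕ} (f : Fin (2 * n) → M) :
    ∏ j, f j = ∏ k, f (idx n k true) * f (idx n k false) := by
  rw [← (idx_bijective n).prod_comp f, Fintype.prod_prod_type]
  simp only [Fintype.prod_bool]

theorem moebius_sub_moebius {K : Type*} [Field K] (p q : K) {r s x y : K}
    (hx : r * x + s ≠ 0) (hy : r * y + s ≠ 0) :
    (p * x + q) / (r * x + s) - (p * y + q) / (r * y + s) =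
      (p * s - q * r) / ((r * x + s) * (r * y + s)) * (x - y) := by
  rw [div_sub_div _ _ hx hy, div_mul_eq_mul_div]
  ring

theorem strictMonoOn_moebius {K : Type*} [Field K] [LinearOrder K] [IsStrictOrderedRing K]
    {p q r s : K} (h : 0 < p * s - q * r) :
    StrictMonoOn (fun x => (p * x + q) / (r * x + s)) {x | 0 < r * x + s} := by
  intro x (hx : 0 < r * x + s) y (hy : 0 < r * y + s) hxy
  rw [← sub_pos, moebius_sub_moebius p q hy.ne' hx.ne']
  exact mul_pos (div_pos h (mul_pos hy hx)) (sub_pos.2 hxy)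

theorem div_mul_rpow_two_mul {D x y : ℝ} (hD : 0 ≤ D) (hxy : 0 ≤ x * y) (α : ℝ) :
    (D / (x * y)) ^ (2 * α) = (D / x ^ 2) ^ α * (D / y ^ 2) ^ α := by
  rw [Real.rpow_mul (div_nonneg hD hxy), Real.rpow_two,
    ← Real.mul_rpow (by positivity) (by positivity)]
  congr 1
  ring

section DifferenceIdentity

variable {n : ℕ} {D : ℝ} {b b' u : Fin (2 * n) → ℝ}

theorem chi_eq_of_sub_eq (hsub : ∀ i j, b' i - b' j = D / (u i * u j) * (b i - b j))
    (hD : D ≠ 0) (hu : ∀ k, u (idx n k true) * u (idx n k false) ≠ 0) (i j : Fin n) :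
    chi n b' i j = chi n b i j := by
  have hfactor : D ^ 2 / ((u (idx n i true) * u (idx n i false)) *
      (u (idx n j true) * u (idx n j false))) ≠ 0 :=
    div_ne_zero (pow_ne_zero 2 hD) (mul_ne_zero (hu i) (hu j))
  simp only [chi, hsub]
  rw [← mul_div_mul_left _ ((b (idx n i true) - b (idx n j false)) * _) hfactor]
  congr 1 <;> ring

theorem Zfun_eq_of_sub_eq (hsub : ∀ i j, b' i - b' j = D / (u i * u j) * (b i - b j))
    (hD : 0 < D) (hu : ∀ k, 0 < u (idx n k true) * u (idx n k false))
    (hb : ∀ k, b (idx n k false) < b (idx n k true)) :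
    Zfun n b' = (∏ j, (D / u j ^ 2) ^ (-(1 : ℝ) / 16)) * Zfun n b := by
  have hgap (k : Fin n) : (b' (idx n k true) - b' (idx n k false)) ^ (-(1 : ℝ) / 8) =
      ((D / u (idx n k true) ^ 2) ^ (-(1 : ℝ) / 16) *
        (D / u (idx n k false) ^ 2) ^ (-(1 : ℝ) / 16)) *
      (b (idx n k true) - b (idx n k false)) ^ (-(1 : ℝ) / 8) := by
    rw [hsub, Real.mul_rpow (div_pos hD (hu k)).le (sub_pos.2 (hb k)).le,
      ← div_mul_rpow_two_mul hD.le (hu k).le]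
    norm_num
  simp only [Zfun, hgap, chi_eq_of_sub_eq hsub hD.ne' fun k => (hu k).ne']
  rw [prod_mul_distrib, prod_eq_prod_idx, mul_assoc]

theorem Zfun_affine (hb : ∀ k, b (idx n k false) < b (idx n k true)) {lam : ℝ} (hlam : 0 < lam)
    (c : ℝ) : Zfun n (fun j => lam * b j + c) = lam ^ (-(n : ℝ) / 8) * Zfun n b := by
  have hprod : ∏ _j : Fin (2 * n), (lam / 1 ^ 2) ^ (-(1 : ℝ) / 16) = lam ^ (-(n : ℝ) / 8) := by
    rw [prod_const, card_univ, Fintype.card_fin, one_pow, div_one, ← Real.rpow_mul_natCast hlam.le]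
    congr 1
    push_cast
    ring
  rw [← hprod]
  exact Zfun_eq_of_sub_eq (u := fun _ => 1) (fun i j => by ring) hlam (by simp) hb

end DifferenceIdentity

/-- `hpole` says that the pole of `w` lies on none of the arcs `[β₂ₖ₋₁, β₂ₖ]`. A pole between two
arcs permutes them cyclically, so the images of the `βⱼ` may leave the chamber. -/
theorem Z_moebius_covariance_general {n : ℕ} {p q r s : ℝ} (h : 0 < p * s - q * r)
    {β : Fin (2 * n) → ℝ} (hβ : ∀ k, β (idx n k false) < β (idx n k true))
    (hpole : ∀ k, 0 < (r * β (idx n k true) + s) * (r * β (idx n k false) + s)) :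
    Zfun n (fun j => (p * β j + q) / (r * β j + s)) =
      (∏ j, ((p * s - q * r) / (r * β j + s) ^ 2) ^ (-(1 : ℝ) / 16)) * Zfun n β := by
  have hden (j : Fin (2 * n)) : r * β j + s ≠ 0 := by
    obtain ⟨⟨k, _ | _⟩, rfl⟩ := (idx_bijective n).surjective j
    · exact right_ne_zero_of_mul (hpole k).ne'
    · exact left_ne_zero_of_mul (hpole k).ne'
  exact Zfun_eq_of_sub_eq (fun i j => moebius_sub_moebius p q (hden i) (hden j)) h hpole hβ

/-- Möbius covariance of `Z` with conformal weight `1/16`.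
For `w(z) = (pz + q)/(rz + s)` with `ps − qr > 0` and `r βⱼ + s > 0` for all `j`,
the image points lie in the chamber and
`Z(w(β₁), …, w(β₂ₙ)) = ∏ⱼ w'(βⱼ)^{−1/16} · Z(β)`, where `w'(x) = (ps − qr)/(rx + s)²`.
In particular `Z(λβ + c₀) = λ^{−n/8} Z(β)` for `λ > 0`, `c₀ ∈ ℝ`. -/
theorem Z_moebius_covariance (n : ℕ) (hn : 1 ≤ n)
    (p q r s : ℝ) (h : 0 < p * s - q * r)
    (β : Fin (2*n) → ℝ) (hβ : β ∈ chamber n)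
    (hpos : ∀ j : Fin (2*n), 0 < r * β j + s) :
    (fun j => (p * β j + q) / (r * β j + s)) ∈ chamber n ∧
    Zfun n (fun j => (p * β j + q) / (r * β j + s))
      = (∏ j : Fin (2*n), ((p * s - q * r) / (r * β j + s)^2) ^ (-(1:ℝ)/16)) * Zfun n β ∧
    ∀ lam : ℝ, 0 < lam → ∀ c₀ : ℝ,
      Zfun n (fun j => lam * β j + c₀) = lam ^ (-(n:ℝ)/8) * Zfun n β := by
  have hlink (k : Fin n) : β (idx n k false) < β (idx n k true) := hβ (idx_false_lt_idx_true k)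
  exact ⟨fun i j hij => strictMonoOn_moebius h (hpos i) (hpos j) (hβ hij),
    Z_moebius_covariance_general h hlink fun k => mul_pos (hpos _) (hpos _),
    fun _ hlam c₀ => Zfun_affine hlink hlam c₀⟩
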